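/- arXiv:2002.03142 — 2 statements merged into one kernel-verified Lean document; each statement's English description precedes it below -/
import Mathlib

section
/- (KKT rank inequality, general step of Theorem 2.) Let X, Y ∈ ℂ^{n×n} be Hermitian positive semidefinite with X Y = 0. Let h₁, h₂, h₃, h₄ ∈ ℂⁿ, let H₁, H₂, H₃, H₄ be complex matrices with n rows, and let m ≥ 0, ν ≥ 0, n' ≥ 0, μ ≥ 0, ρ₁ ≥ 0, P_S ≥ 0, P_J ≥ 0, ω > 0, σ_R² > 0 be real scalars satisfying the stationarity identity (1+m) h₁h₁† − μ ρ₁ H₁H₁† + ν h₂h₂† + n'(P_S h₃h₃† + P_J h₄h₄† + σ_R² H₄H₄†) − ω(P_S H₂H₂† + P_J H₃H₃† + σ_R² I) + Y = 0. Then rank(X) ≤ rank((1+m) h₁h₁† + ν h₂h₂† + n'(P_S h₃h₃† + P_J h₄h₄† + σ_R² H₄H₄†)). -/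
open Matrix ComplexOrder

/-- KKT rank inequality, general step of Theorem 2: Let
`X, Y ∈ ℂ^{n×n}` be Hermitian positive semidefinite with `X Y = 0`.  Let
`h₁, h₂, h₃, h₄ ∈ ℂⁿ`, let `H₁, H₂, H₃, H₄` be complex matrices with `n` rows,
and let `m ≥ 0, ν ≥ 0, n' ≥ 0, μ ≥ 0, ρ₁ ≥ 0, P_S ≥ 0, P_J ≥ 0, ω > 0, σ_R² > 0`
be real scalars satisfying the stationarity identity
`(1+m) h₁h₁ᴴ − μρ₁ H₁H₁ᴴ + ν h₂h₂ᴴ + n'(P_S h₃h₃ᴴ + P_J h₄h₄ᴴ + σ_R² H₄H₄ᴴ)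
 − ω(P_S H₂H₂ᴴ + P_J H₃H₃ᴴ + σ_R² I) + Y = 0`.
Then `rank X ≤ rank((1+m) h₁h₁ᴴ + ν h₂h₂ᴴ + n'(P_S h₃h₃ᴴ + P_J h₄h₄ᴴ + σ_R² H₄H₄ᴴ))`.
Outer products `h hᴴ` are written `vecMulVec h (star h)`. -/
theorem statement12 (n m₁ m₂ m₃ m₄ : ℕ)
    (X Y : Matrix (Fin n) (Fin n) ℂ)
    (hX : X.PosSemidef) (hY : Y.PosSemidef) (hXY : X * Y = 0)
    (h₁ h₂ h₃ h₄ : Fin n → ℂ)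
    (H₁ : Matrix (Fin n) (Fin m₁) ℂ) (H₂ : Matrix (Fin n) (Fin m₂) ℂ)
    (H₃ : Matrix (Fin n) (Fin m₃) ℂ) (H₄ : Matrix (Fin n) (Fin m₄) ℂ)
    (m ν n' μ ρ₁ PS PJ ω σR2 : ℝ)
    (hm : 0 ≤ m) (hν : 0 ≤ ν) (hn' : 0 ≤ n') (hμ : 0 ≤ μ) (hρ₁ : 0 ≤ ρ₁)
    (hPS : 0 ≤ PS) (hPJ : 0 ≤ PJ) (hω : 0 < ω) (hσR : 0 < σR2)
    (hstat :
      ((1 + m : ℝ) : ℂ) • vecMulVec h₁ (star h₁)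
        - ((μ * ρ₁ : ℝ) : ℂ) • (H₁ * H₁ᴴ)
        + (ν : ℂ) • vecMulVec h₂ (star h₂)
        + (n' : ℂ) • ((PS : ℂ) • vecMulVec h₃ (star h₃)
            + (PJ : ℂ) • vecMulVec h₄ (star h₄) + (σR2 : ℂ) • (H₄ * H₄ᴴ))
        - (ω : ℂ) • ((PS : ℂ) • (H₂ * H₂ᴴ) + (PJ : ℂ) • (H₃ * H₃ᴴ)
            + (σR2 : ℂ) • (1 : Matrix (Fin n) (Fin n) ℂ))
        + Y = 0) :
    X.rank ≤
      (((1 + m : ℝ) : ℂ) • vecMulVec h₁ (star h₁)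
        + (ν : ℂ) • vecMulVec h₂ (star h₂)
        + (n' : ℂ) • ((PS : ℂ) • vecMulVec h₃ (star h₃)
            + (PJ : ℂ) • vecMulVec h₄ (star h₄)
            + (σR2 : ℂ) • (H₄ * H₄ᴴ))).rank := by
  set A := ((1 + m : ℝ) : ℂ) • vecMulVec h₁ (star h₁)
        + (ν : ℂ) • vecMulVec h₂ (star h₂)
        + (n' : ℂ) • ((PS : ℂ) • vecMulVec h₃ (star h₃)
            + (PJ : ℂ) • vecMulVec h₄ (star h₄)
            + (σR2 : ℂ) • (H₄ * H₄ᴴ)) with hA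
  have c : ∀ {r : ℝ}, 0 ≤ r → (0 : ℂ) ≤ (r : ℂ) := fun h => by exact_mod_cast h
  have hD : (((μ * ρ₁ : ℝ) : ℂ) • (H₁ * H₁ᴴ)
      + (ω : ℂ) • ((PS : ℂ) • (H₂ * H₂ᴴ) + (PJ : ℂ) • (H₃ * H₃ᴴ)
            + (σR2 : ℂ) • (1 : Matrix (Fin n) (Fin n) ℂ))).PosDef := by
    have e1 : (((μ * ρ₁ : ℝ) : ℂ) • (H₁ * H₁ᴴ)).PosSemidef :=
      (posSemidef_self_mul_conjTranspose H₁).smul (c (mul_nonneg hμ hρ₁))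
    have e2 := (posSemidef_self_mul_conjTranspose H₂).smul (c hPS)
    have e3 := (posSemidef_self_mul_conjTranspose H₃).smul (c hPJ)
    have e4 : ((σR2 : ℂ) • (1 : Matrix (Fin n) (Fin n) ℂ)).PosDef :=
      PosDef.one.smul (by exact_mod_cast hσR)
    exact PosDef.posSemidef_add e1
      ((PosDef.posSemidef_add (e2.add e3) e4).smul (by exact_mod_cast hω))
  set D := ((μ * ρ₁ : ℝ) : ℂ) • (H₁ * H₁ᴴ)
      + (ω : ℂ) • ((PS : ℂ) • (H₂ * H₂ᴴ) + (PJ : ℂ) • (H₃ * H₃ᴴ)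
            + (σR2 : ℂ) • (1 : Matrix (Fin n) (Fin n) ℂ)) with hDdef
  have hADY : A + Y = D := by
    rw [← sub_eq_zero, ← hstat, hA, hDdef]
    abel
  have hXA : X * A = X * D := by
    rw [← hADY, mul_add X A Y, hXY, add_zero]
  calc X.rank = (X * D).rank :=
        (rank_mul_eq_left_of_det_ne_zero D X hD.det_pos.ne').symm
    _ = (X * A).rank := by rw [hXA]
    _ ≤ A.rank := rank_mul_le_right X A
end

section
/- (Core of Theorem 2: rank-one optimality of the SDP relaxation.) Let X, Y ∈ ℂ^{n×n} be Hermitian positive semidefinite with X Y = 0. Let h₁ ∈ ℂⁿ, let H₁, H₂, H₃ be complex matrices with n rows, and let m ≥ 0, μ ≥ 0, ρ₁ ≥ 0, P_S ≥ 0, P_J ≥ 0, ω > 0, σ_R² > 0 be real scalars satisfying the stationarity identity (1+m) h₁h₁† − μ ρ₁ H₁H₁† − ω(P_S H₂H₂† + P_J H₃H₃† + σ_R² I) + Y = 0. Then rank(X) ≤ 1. -/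
open Matrix ComplexOrder

/-- Core of Theorem 2: rank-one optimality of the SDP relaxation:
Let `X, Y ∈ ℂ^{n×n}` be Hermitian positive semidefinite with `X Y = 0`.  Let
`h₁ ∈ ℂⁿ`, let `H₁, H₂, H₃` be complex matrices with `n` rows, and let
`m ≥ 0, μ ≥ 0, ρ₁ ≥ 0, P_S ≥ 0, P_J ≥ 0, ω > 0, σ_R² > 0` be real scalars
satisfying the stationarity identity
`(1+m) h₁h₁ᴴ − μρ₁ H₁H₁ᴴ − ω(P_S H₂H₂ᴴ + P_J H₃H₃ᴴ + σ_R² I) + Y = 0`.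
Then `rank X ≤ 1`. -/
theorem statement13 (n m₁ m₂ m₃ : ℕ)
    (X Y : Matrix (Fin n) (Fin n) ℂ)
    (hX : X.PosSemidef) (hY : Y.PosSemidef) (hXY : X * Y = 0)
    (h₁ : Fin n → ℂ)
    (H₁ : Matrix (Fin n) (Fin m₁) ℂ) (H₂ : Matrix (Fin n) (Fin m₂) ℂ)
    (H₃ : Matrix (Fin n) (Fin m₃) ℂ)
    (m μ ρ₁ PS PJ ω σR2 : ℝ)
    (hm : 0 ≤ m) (hμ : 0 ≤ μ) (hρ₁ : 0 ≤ ρ₁)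
    (hPS : 0 ≤ PS) (hPJ : 0 ≤ PJ) (hω : 0 < ω) (hσR : 0 < σR2)
    (hstat :
      ((1 + m : ℝ) : ℂ) • vecMulVec h₁ (star h₁)
        - ((μ * ρ₁ : ℝ) : ℂ) • (H₁ * H₁ᴴ)
        - (ω : ℂ) • ((PS : ℂ) • (H₂ * H₂ᴴ) + (PJ : ℂ) • (H₃ * H₃ᴴ)
            + (σR2 : ℂ) • (1 : Matrix (Fin n) (Fin n) ℂ))
        + Y = 0) :
    X.rank ≤ 1 := by
  have hM : ((ω : ℂ) • ((PS : ℂ) • (H₂ * H₂ᴴ) + (PJ : ℂ) • (H₃ * H₃ᴴ)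
      + (σR2 : ℂ) • (1 : Matrix (Fin n) (Fin n) ℂ))
      + ((μ * ρ₁ : ℝ) : ℂ) • (H₁ * H₁ᴴ)).PosDef := by
    have a1 : (0 : ℂ) ≤ ((μ * ρ₁ : ℝ) : ℂ) := by
      exact_mod_cast mul_nonneg hμ hρ₁
    have a2 : (0 : ℂ) ≤ (PS : ℂ) := by exact_mod_cast hPS
    have a3 : (0 : ℂ) ≤ (PJ : ℂ) := by exact_mod_cast hPJ
    have a4 : (0 : ℂ) < (ω : ℂ) := by exact_mod_cast hω
    have a5 : (0 : ℂ) < (σR2 : ℂ) := by exact_mod_cast hσR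
    refine Matrix.PosDef.add_posSemidef (Matrix.PosDef.smul ?_ a4)
      ((posSemidef_self_mul_conjTranspose H₁).smul a1)
    exact Matrix.PosDef.posSemidef_add
      (((posSemidef_self_mul_conjTranspose H₂).smul a2).add
        ((posSemidef_self_mul_conjTranspose H₃).smul a3))
      (Matrix.PosDef.one.smul a5)
  generalize hMd : ((ω : ℂ) • ((PS : ℂ) • (H₂ * H₂ᴴ) + (PJ : ℂ) • (H₃ * H₃ᴴ)
      + (σR2 : ℂ) • (1 : Matrix (Fin n) (Fin n) ℂ))
      + ((μ * ρ₁ : ℝ) : ℂ) • (H₁ * H₁ᴴ)) = M at hM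
  have e : M = vecMulVec (((1 + m : ℝ) : ℂ) • h₁) (star h₁) + Y := by
    rw [← hMd, smul_vecMulVec, ← sub_eq_zero, ← neg_eq_zero, ← hstat]
    abel
  have hdet : IsUnit M.det := (Matrix.isUnit_iff_isUnit_det M).1 hM.isUnit
  rw [← rank_mul_eq_left_of_isUnit_det M X hdet, e, Matrix.mul_add, hXY, add_zero]
  exact (rank_mul_le_right _ _).trans (rank_vecMulVec_le _ _)
end
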